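/- Let a₁,…,a_{k+ℓ} be pairwise distinct letters of an alphabet A with k ≥ 2 and ℓ ≥ 1, and let s be the standard episturmian sequence with directive sequence Δ = a₁·a₂⋯a_{k−1}·a₁·a_k⋯a_{k+ℓ−1}·(a_{k+ℓ})^ω. Then s is balanced. -/

import Mathlib

/-- The palindromic right closure `w⁽⁺⁾`: the shortest palindrome having `w` as a prefix. -/
def palClosure {A : Type*} [DecidableEq A] (w : List A) : List A :=
  w ++ (w.take (Nat.find (⟨w.length, by simp⟩ :
    ∃ i, (w.drop i).reverse = w.drop i))).reverse

/-- Iterated palindromic closure: `Pal ε = ε`, `Pal (w·x) = (Pal w · x)⁽⁺⁾`. -/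
def Pal {A : Type*} [DecidableEq A] (w : List A) : List A :=
  w.foldl (fun p x => palClosure (p ++ [x])) []

/-- `u` is a factor of the infinite word `s`. -/
def IsFactorOf {A : Type*} (u : List A) (s : ℕ → A) : Prop :=
  ∃ i : ℕ, u = (List.range u.length).map (fun j => s (i + j))

/-- `s` is balanced. -/
def IsBalanced {A : Type*} [DecidableEq A] (s : ℕ → A) : Prop :=
  ∀ u v : List A, IsFactorOf u s → IsFactorOf v s → u.length = v.length →
    ∀ a : A, u.count a ≤ v.count a + 1

/-- `u` is a prefix of the infinite word `s`. -/
def IsPrefixOf {A : Type*} (u : List A) (s : ℕ → A) : Prop :=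
  u = (List.range u.length).map s

/-- `s` is a standard episturmian sequence with directive sequence `Δ`. -/
def IsStdEpisturmian {A : Type*} [DecidableEq A] (s Δ : ℕ → A) : Prop :=
  ∀ n : ℕ, IsPrefixOf (Pal ((List.range n).map Δ)) s

/-- Concatenation of a finite word and an infinite word. -/
def wcat {A : Type*} (u : List A) (s : ℕ → A) : ℕ → A :=
  fun n => if h : n < u.length then u.get ⟨n, h⟩ else s (n - u.length)

/-- The constant infinite word `c^ω`. -/
def constW {A : Type*} (c : A) : ℕ → A := fun _ => c

/-- The purely periodic infinite word `w^ω` (`d` is a default letter, irrelevant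
when `w` is nonempty). -/
def perW {A : Type*} (w : List A) (d : A) : ℕ → A :=
  fun n => w.getD (n % w.length) d

/-- At least three distinct letters occur in `s`. -/
def ThreeLetters {A : Type*} (s : ℕ → A) : Prop :=
  ∃ a b c : A, a ≠ b ∧ a ≠ c ∧ b ≠ c ∧
    a ∈ Set.range s ∧ b ∈ Set.range s ∧ c ∈ Set.range s

/-!
Let `w = Pal (a₁ ⋯ a_{k-1})`, a prefix of the ruler word. Since `w` ends with `a₁` and has no factor
`a₁ a₁`, closing `w a₁` gives `w w`. The letters that follow in the directive sequence are new, so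
closing them doubles the word around each of them until the last one repeats forever, and the limit
is `w w b₀ w w b₁ w w b₂ ⋯`, where `b` is a truncated ruler word in the new letters.

A letter of `b` occupies one residue class. A letter of `w` occupies, modulo `P = 2 |w| + 1`, an
arithmetic progression with `α` terms whose difference is an inverse of `α`. Multiplication by `α`
turns it into an interval of residues, so its positions are those of a letter in a mechanical word
of slope `α / P`, whose counts in two factors of equal length differ by at most one.
-/

section MapRange

variable {A : Type*}

theorem map_range_add (f : ℕ → A) (m n : ℕ) :
    (List.range (m + n)).map f = (List.range m).map f ++ (List.range n).map fun t => f (m + t) := by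
  rw [List.range_add, List.map_append, List.map_map, Function.comp_def]

theorem map_range_succ (f : ℕ → A) (n : ℕ) :
    (List.range (n + 1)).map f = (List.range n).map f ++ [f n] :=
  map_range_add f n 1

theorem reverse_map_range {f g : ℕ → A} {n : ℕ} (h : ∀ t < n, f (n - 1 - t) = g t) :
    ((List.range n).map f).reverse = (List.range n).map g := by
  refine List.ext_getElem (by simp) fun t _ ht => ?_
  simpa using h t (by simpa using ht)

theorem getElem?_map_range_eq_some_iff {f : ℕ → A} {n i : ℕ} {x : A} :
    ((List.range n).map f)[i]? = some x ↔ i < n ∧ f i = x := by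
  simp [List.getElem?_eq_some_iff]

end MapRange

section PalindromicClosure

variable {A : Type*} [DecidableEq A]

theorem reverse_palClosure (w : List A) : (palClosure w).reverse = palClosure w := by
  unfold palClosure
  generalize_proofs hex
  have hpal : (w.drop (Nat.find hex)).reverse = w.drop (Nat.find hex) := Nat.find_spec hex
  generalize Nat.find hex = i at hpal ⊢
  have hw : w.reverse = w.drop i ++ (w.take i).reverse := by
    rw [← hpal, ← List.reverse_append, List.take_append_drop]
  rw [List.reverse_append, List.reverse_reverse, hw, ← List.append_assoc, List.take_append_drop]

theorem mem_palClosure {w : List A} {x : A} : x ∈ palClosure w ↔ x ∈ w := by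
  simpa [palClosure] using List.mem_of_mem_take

theorem palClosure_append {u v : List A} (hv : v.reverse = v)
    (hmax : ∀ q, q <:+ u → q ≠ [] → (q ++ v).reverse ≠ q ++ v) :
    palClosure (u ++ v) = u ++ v ++ u.reverse := by
  unfold palClosure
  generalize_proofs hex
  have hfind : Nat.find hex = u.length := by
    refine (Nat.find_eq_iff hex).2 ⟨by simp [hv], fun i hi => ?_⟩
    rw [List.drop_append_of_le_length hi.le]
    exact hmax _ (List.drop_suffix i u) (by simpa using hi)
  simp [hfind]

theorem palClosure_append_cons_of_notMem {u v : List A} {c : A} (hc : c ∉ u)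
    (hv : (c :: v).reverse = c :: v) :
    palClosure (u ++ c :: v) = u ++ c :: v ++ u.reverse := by
  refine palClosure_append hv fun q hq hne hpal => hc ?_
  obtain ⟨y, q, rfl⟩ := List.exists_cons_of_ne_nil hne
  have hhead := congrArg List.head? hpal
  rw [List.reverse_append, hv] at hhead
  obtain rfl : c = y := by simpa using hhead
  exact hq.subset List.mem_cons_self

theorem palClosure_concat_self {u : List A} {c : A} (hc : ¬ [c, c] <:+: u ++ [c]) :
    palClosure (u ++ [c] ++ [c]) = (u ++ [c]) ++ (u ++ [c]).reverse := by
  have hclosure : palClosure (u ++ [c, c]) = u ++ [c, c] ++ u.reverse := by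
    refine palClosure_append rfl fun q hq hne hpal => hc ?_
    have hprefix : [c, c] <+: q ++ [c] ++ [c] := ⟨q.reverse, by simpa using hpal⟩
    have hprefix' : [c, c] <+: q ++ [c] :=
      List.prefix_of_prefix_length_le hprefix (List.prefix_append _ _)
        (by have := List.length_pos_iff.2 hne; simp; omega)
    exact hprefix'.isInfix.trans ((List.suffix_append_inj_of_length_eq rfl).2 ⟨hq, rfl⟩).isInfix
  simpa using hclosure

theorem palClosure_map_range {f : ℕ → A} {i L : ℕ} (hi : i ≤ L)
    (hreflect : ∀ t ≤ L + i, f (L + i - t) = f t) (hfresh : ∀ t < i, f t ≠ f L) :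
    palClosure ((List.range L).map f ++ [f L]) = (List.range (L + 1 + i)).map f := by
  obtain ⟨d, rfl⟩ := Nat.exists_eq_add_of_le hi
  have hfi : f i = f (i + d) := by simpa using hreflect (i + d) (by omega)
  set v := (List.range d).map fun t => f (i + (t + 1)) with hv
  have hcons : f (i + d) :: v = (List.range (d + 1)).map fun t => f (i + t) := by
    simp [hv, ← hfi, List.range_succ_eq_map, Function.comp_def]
  have hsplit : (List.range (i + d)).map f ++ [f (i + d)]
      = (List.range i).map f ++ f (i + d) :: v := by
    rw [hcons, ← map_range_succ, add_assoc, map_range_add]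
  have hpal : (f (i + d) :: v).reverse = f (i + d) :: v := by
    rw [hcons]
    refine reverse_map_range fun t ht => ?_
    rw [← hreflect (i + t) (by omega)]
    congr 1
    omega
  have hreverse : ((List.range i).map f).reverse = (List.range i).map fun t => f (i + d + 1 + t) :=
    reverse_map_range fun t ht => by
      rw [← hreflect (i + d + 1 + t) (by omega)]
      congr 1
      omega
  rw [hsplit, palClosure_append_cons_of_notMem (by simpa using hfresh) hpal, ← hsplit, hreverse,
    ← map_range_succ, ← map_range_add]

theorem pal_concat (w : List A) (x : A) : Pal (w ++ [x]) = palClosure (Pal w ++ [x]) := by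
  simp [Pal]

theorem reverse_pal (w : List A) : (Pal w).reverse = Pal w := by
  induction w using List.reverseRecOn with
  | nil => rfl
  | append_singleton w x _ => rw [pal_concat, reverse_palClosure]

theorem mem_pal {w : List A} {x : A} : x ∈ Pal w ↔ x ∈ w := by
  induction w using List.reverseRecOn with
  | nil => rfl
  | append_singleton w y ih => simp [pal_concat, mem_palClosure, ih]

end PalindromicClosure

section Mechanical

/-- `S` is the set of jumps of the sequence `n ↦ ⌊(α n + γ) / P⌋`: it is the set of positions of one
letter in a binary mechanical word of rational slope `α / P`. -/
def IsMechanical (S : Set ℕ) : Prop :=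
  ∃ α γ P : ℕ, α ≤ P ∧ 0 < P ∧ ∀ n, n ∈ S ↔ (α * n + γ) / P < (α * (n + 1) + γ) / P

theorem div_lt_add_div_iff {P α y : ℕ} (hα : α ≤ P) (hP : 0 < P) :
    y / P < (y + α) / P ↔ (y + α) % P < α := by
  have hlt := Nat.mod_lt y hP
  rw [Nat.add_div hP, Nat.add_mod]
  rcases hα.lt_or_eq with hα | rfl
  · rw [Nat.div_eq_of_lt hα, Nat.mod_eq_of_lt hα]
    split_ifs with h
    · rw [Nat.mod_eq_sub_mod h, Nat.mod_eq_of_lt (a := y % P + α - P) (by omega)]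
      omega
    · rw [Nat.mod_eq_of_lt (a := y % P + α) (by omega)]
      omega
  · simp [hP, hlt.not_ge, Nat.mod_lt]

theorem IsMechanical.of_arithmeticProgression {S : Set ℕ} {α b d P : ℕ} (hα : α ≤ P) (hP : 0 < P)
    (hd : α * d ≡ 1 [MOD P]) (hS : ∀ n, n ∈ S ↔ ∃ t < α, n ≡ b + d * t [MOD P]) :
    IsMechanical S := by
  obtain ⟨Q, rfl⟩ : ∃ Q, P = Q + 1 := ⟨P - 1, by omega⟩
  refine ⟨α, α * Q * (b + 1), Q + 1, hα, hP, fun n => ?_⟩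
  have hshift : α * n + α * Q * (b + 1) + α + α * b ≡ α * n [MOD Q + 1] := by
    have hmul : α * n + α * Q * (b + 1) + α + α * b = α * n + (Q + 1) * (α * (b + 1)) := by ring
    simp [hmul, Nat.ModEq]
  rw [hS, show α * (n + 1) + α * Q * (b + 1) = α * n + α * Q * (b + 1) + α by ring,
    div_lt_add_div_iff hα hP]
  generalize α * n + α * Q * (b + 1) + α = y at hshift ⊢
  constructor
  · rintro ⟨t, ht, hn⟩
    have hy : y ≡ t [MOD Q + 1] := by
      refine Nat.ModEq.add_right_cancel' (α * b) ?_
      calc y + α * b ≡ α * n [MOD Q + 1] := hshift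
        _ ≡ α * (b + d * t) [MOD Q + 1] := hn.mul_left α
        _ = α * d * t + α * b := by ring
        _ ≡ 1 * t + α * b [MOD Q + 1] := (hd.mul_right t).add_right _
        _ = t + α * b := by rw [one_mul]
    rwa [hy, Nat.mod_eq_of_lt (ht.trans_le hα)]
  · refine fun ht => ⟨_, ht, ?_⟩
    calc n = 1 * n := (one_mul n).symm
      _ ≡ α * d * n [MOD Q + 1] := hd.symm.mul_right n
      _ = d * (α * n) := by ring
      _ ≡ d * (y + α * b) [MOD Q + 1] := hshift.symm.mul_left d
      _ = α * d * b + d * y := by ring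
      _ ≡ 1 * b + d * (y % (Q + 1)) [MOD Q + 1] :=
        (hd.mul_right b).add ((Nat.mod_modEq y _).symm.mul_left d)
      _ = b + d * (y % (Q + 1)) := by rw [one_mul]

theorem IsMechanical.of_modEq {S : Set ℕ} {b P : ℕ} (hP : 0 < P)
    (hS : ∀ n, n ∈ S ↔ n ≡ b [MOD P]) : IsMechanical S :=
  .of_arithmeticProgression (α := 1) (d := 1) (b := b) hP hP rfl (by simp [hS])

theorem IsMechanical.empty : IsMechanical ∅ := ⟨0, 0, 1, by simp⟩

theorem count_map_range_eq {A : Type*} [DecidableEq A] (s : ℕ → A) (x : A) {α γ P : ℕ}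
    (hα : α ≤ P) (hP : 0 < P)
    (hs : ∀ n, s n = x ↔ (α * n + γ) / P < (α * (n + 1) + γ) / P) (i L : ℕ) :
    ((List.range L).map fun t => s (i + t)).count x + (α * i + γ) / P
      = (α * i + γ + α * L) / P := by
  induction L with
  | zero => simp
  | succ L ih =>
    have hstep := hs (i + L)
    have hy : α * i + γ + α * (L + 1) = α * i + γ + α * L + α := by ring
    rw [show α * (i + L) + γ = α * i + γ + α * L by ring,
      show α * (i + L + 1) + γ = α * i + γ + α * L + α by ring] at hstep
    rw [map_range_succ, List.count_append, add_right_comm, ih, hy]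
    generalize α * i + γ + α * L = y at hstep ⊢
    have hmono : y / P ≤ (y + α) / P := Nat.div_le_div_right (Nat.le_add_right y α)
    have hjump : (y + α) / P ≤ y / P + 1 := by
      rw [← Nat.add_div_right y hP]
      exact Nat.div_le_div_right (Nat.add_le_add_left hα y)
    by_cases h : s (i + L) = x
    · have := hstep.1 h
      simp [h]
      omega
    · have := mt hstep.2 h
      simp [h]
      omega

theorem isBalanced_of_forall_isMechanical {A : Type*} [DecidableEq A] {s : ℕ → A}
    (hs : ∀ x, IsMechanical {n | s n = x}) : IsBalanced s := by
  rintro u v ⟨i, hu⟩ ⟨j, hv⟩ hlen x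
  obtain ⟨α, γ, P, hα, hP, hx⟩ := hs x
  have hcu := count_map_range_eq s x hα hP hx i u.length
  have hcv := count_map_range_eq s x hα hP hx j v.length
  rw [← hu, Nat.add_div (a := α * i + γ) hP] at hcu
  rw [← hv, ← hlen, Nat.add_div (a := α * j + γ) hP] at hcv
  split_ifs at hcu hcv <;> omega

end Mechanical

section Ruler

variable {A : Type*}

/-- The ruler word `c₀ c₁ c₀ c₂ c₀ c₁ c₀ c₃ ⋯`, in which all the letters `c i` with `i ≥ ℓ` are
replaced by `c ℓ`. The letter at the `n`-th place, counting from one, is governed by the 2-adic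
valuation of `n`. -/
def rulerWord (c : ℕ → A) (ℓ n : ℕ) : A :=
  c (min (padicValNat 2 (n + 1)) ℓ)

/-- One more than the length of `Pal (c₀ c₁ ⋯ c_{j-1})` when `c` is constant from `ℓ` on and has
otherwise distinct letters: it doubles at each of the first `ℓ` steps, and then grows by `2 ^ ℓ`
at each step. The shift by one avoids subtractions. -/
def rulerLength (ℓ j : ℕ) : ℕ :=
  2 ^ min j ℓ * (j - ℓ + 1)

theorem rulerLength_of_le {ℓ j : ℕ} (hj : j ≤ ℓ) : rulerLength ℓ j = 2 ^ j := by
  simp [rulerLength, hj]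

theorem rulerLength_succ (ℓ j : ℕ) : rulerLength ℓ (j + 1) = rulerLength ℓ j + 2 ^ min j ℓ := by
  rcases lt_or_ge j ℓ with hj | hj
  · rw [rulerLength_of_le hj, rulerLength_of_le hj.le, min_eq_left hj.le, pow_succ, mul_two]
  · rw [rulerLength, rulerLength, min_eq_right hj, min_eq_right (by omega), Nat.sub_add_comm hj,
      mul_add_one]

theorem lt_rulerLength (ℓ j : ℕ) : j < rulerLength ℓ j + ℓ := by
  have : j - ℓ + 1 ≤ rulerLength ℓ j := Nat.le_mul_of_pos_left _ (by positivity)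
  omega

theorem two_pow_min_dvd_rulerLength (ℓ j : ℕ) : 2 ^ min j ℓ ∣ rulerLength ℓ j :=
  Dvd.intro _ rfl

theorem two_pow_min_le_rulerLength (ℓ j : ℕ) : 2 ^ min j ℓ ≤ rulerLength ℓ j :=
  Nat.le_mul_of_pos_right _ (by omega)

theorem padicValNat_lt_of_lt_pow {p m n : ℕ} [Fact p.Prime] (hn : n ≠ 0) (h : n < p ^ m) :
    padicValNat p n < m := by
  by_contra! hm
  exact h.not_ge (Nat.le_of_dvd hn.bot_lt ((padicValNat_dvd_iff_le hn).2 hm))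

theorem min_padicValNat_of_dvd_add {p m a b : ℕ} [Fact p.Prime] (ha : a ≠ 0) (hb : b ≠ 0)
    (h : p ^ m ∣ a + b) : min (padicValNat p a) m = min (padicValNat p b) m := by
  have key {a b : ℕ} (hb : b ≠ 0) (h : p ^ m ∣ a + b) :
      min (padicValNat p a) m ≤ padicValNat p b := by
    rw [← padicValNat_dvd_iff_le hb,
      ← Nat.dvd_add_right ((pow_dvd_pow p (min_le_left _ _)).trans pow_padicValNat_dvd)]
    exact (pow_dvd_pow p (min_le_right _ _)).trans h
  exact le_antisymm (le_min (key hb h) (min_le_right _ _))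
    (le_min (key ha (add_comm a b ▸ h)) (min_le_right _ _))

theorem succ_modEq_iff {n v P : ℕ} (hv : 0 < v) : n + 1 ≡ v [MOD P] ↔ n ≡ v - 1 [MOD P] := by
  obtain ⟨v, rfl⟩ := Nat.exists_eq_add_of_le' hv
  exact ⟨Nat.ModEq.add_right_cancel' 1, Nat.ModEq.add_right 1⟩

theorem le_padicValNat_succ_iff {p i n : ℕ} [hp : Fact p.Prime] :
    i ≤ padicValNat p (n + 1) ↔ n ≡ p ^ i - 1 [MOD p ^ i] := by
  rw [← padicValNat_dvd_iff_le (Nat.add_one_ne_zero n), ← succ_modEq_iff (pow_pos hp.out.pos i),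
    ← Nat.modEq_zero_iff_dvd]
  simp [Nat.ModEq]

theorem padicValNat_two_succ_eq_iff {i n : ℕ} :
    padicValNat 2 (n + 1) = i ↔ n ≡ 2 ^ i - 1 [MOD 2 ^ (i + 1)] := by
  have hn := Nat.add_one_ne_zero n
  have hpos : 0 < 2 ^ i := by positivity
  have hval : padicValNat 2 (n + 1) = i ↔ 2 ^ i ∣ n + 1 ∧ ¬ 2 ^ i * 2 ∣ n + 1 := by
    rw [← pow_succ, padicValNat_dvd_iff_le hn, padicValNat_dvd_iff_le hn]
    omega
  rw [hval, pow_succ, ← succ_modEq_iff hpos, Nat.dvd_iff_mod_eq_zero, Nat.dvd_iff_mod_eq_zero,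
    Nat.ModEq, Nat.mod_eq_of_lt (a := 2 ^ i) (by omega), Nat.mod_mul]
  have hlt := Nat.mod_lt (n + 1) hpos
  rcases Nat.mod_two_eq_zero_or_one ((n + 1) / 2 ^ i) with h | h <;> rw [h] <;> omega

variable {c : ℕ → A} {ℓ : ℕ}

theorem rulerWord_eq_iff (hc : Set.InjOn c (Set.Iic ℓ)) {j n : ℕ} (hj : j ≤ ℓ) :
    rulerWord c ℓ n = c j ↔ min (padicValNat 2 (n + 1)) ℓ = j :=
  hc.eq_iff (Set.mem_Iic.2 (min_le_right _ _)) hj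

theorem rulerWord_eq_iff_modEq_of_lt (hc : Set.InjOn c (Set.Iic ℓ)) {j n : ℕ} (hj : j < ℓ) :
    rulerWord c ℓ n = c j ↔ n ≡ 2 ^ j - 1 [MOD 2 ^ (j + 1)] := by
  rw [rulerWord_eq_iff hc hj.le, ← padicValNat_two_succ_eq_iff]
  omega

theorem rulerWord_eq_iff_modEq (hc : Set.InjOn c (Set.Iic ℓ)) {n : ℕ} :
    rulerWord c ℓ n = c ℓ ↔ n ≡ 2 ^ ℓ - 1 [MOD 2 ^ ℓ] := by
  rw [rulerWord_eq_iff hc le_rfl, min_eq_right_iff, le_padicValNat_succ_iff]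

theorem exists_rulerWord_eq_iff_modEq (hc : Set.InjOn c (Set.Iic ℓ)) {j : ℕ} (hj : j ≤ ℓ) :
    ∃ r P, 0 < P ∧ ∀ n, rulerWord c ℓ n = c j ↔ n ≡ r [MOD P] := by
  rcases hj.lt_or_eq with hj | rfl
  · exact ⟨_, _, by positivity, fun n => rulerWord_eq_iff_modEq_of_lt hc hj⟩
  · exact ⟨_, _, by positivity, fun n => rulerWord_eq_iff_modEq hc⟩

theorem rulerWord_eq_of_add_two_eq {m n j : ℕ} (h : m + n + 2 = rulerLength ℓ j) :
    rulerWord c ℓ m = rulerWord c ℓ n := by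
  have hsum : 2 ^ min j ℓ ∣ (m + 1) + (n + 1) := by
    rw [show m + 1 + (n + 1) = m + n + 2 by ring, h]
    exact two_pow_min_dvd_rulerLength ℓ j
  have hmin := min_padicValNat_of_dvd_add (Nat.add_one_ne_zero m) (Nat.add_one_ne_zero n) hsum
  unfold rulerWord
  congr 1
  rcases le_total j ℓ with hj | hj
  · rw [rulerLength_of_le hj] at h
    have hm : padicValNat 2 (m + 1) < j := padicValNat_lt_of_lt_pow (by omega) (by omega)
    have hn : padicValNat 2 (n + 1) < j := padicValNat_lt_of_lt_pow (by omega) (by omega)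
    omega
  · rwa [min_eq_right hj] at hmin

theorem rulerWord_rulerLength_sub_one (c : ℕ → A) (ℓ j : ℕ) :
    rulerWord c ℓ (rulerLength ℓ j - 1) = c (min j ℓ) := by
  have hpos : 0 < rulerLength ℓ j := lt_of_lt_of_le (by positivity) (two_pow_min_le_rulerLength ℓ j)
  rw [rulerWord, Nat.sub_add_cancel hpos]
  rcases le_total j ℓ with hj | hj
  · rw [rulerLength_of_le hj, padicValNat.prime_pow]
  · have hdvd := two_pow_min_dvd_rulerLength ℓ j
    rw [min_eq_right hj] at hdvd ⊢
    rw [min_eq_right ((padicValNat_dvd_iff_le hpos.ne').1 hdvd)]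

theorem rulerWord_ne_of_lt (hc : Set.InjOn c (Set.Iic ℓ)) {j n : ℕ} (hj : j ≤ ℓ)
    (hn : n + 1 < 2 ^ j) : rulerWord c ℓ n ≠ c j := by
  rw [Ne, rulerWord_eq_iff hc hj]
  have : padicValNat 2 (n + 1) < j := padicValNat_lt_of_lt_pow (by omega) hn
  omega

end Ruler

section Interleave

variable {A : Type*}

/-- The infinite word `p b₀ p b₁ p b₂ ⋯`. -/
def interleave (p : List A) (b : ℕ → A) (n : ℕ) : A :=
  p.getD (n % (p.length + 1)) (b (n / (p.length + 1)))

@[simp]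
theorem interleave_nil (b : ℕ → A) : interleave [] b = b := by
  funext n
  simp [interleave, Nat.mod_one]

theorem interleave_mul_add_length (p : List A) (b : ℕ → A) (m : ℕ) :
    interleave p b ((p.length + 1) * m + p.length) = b m := by
  simp [interleave, Nat.mul_add_div, Nat.div_eq_of_lt]

theorem interleave_mul_add_of_lt (p : List A) (b : ℕ → A) (m : ℕ) {r : ℕ} (hr : r < p.length) :
    interleave p b ((p.length + 1) * m + r) = p[r] := by
  simp [interleave, Nat.mod_eq_of_lt (hr.trans (Nat.lt_succ_self _)), hr]

theorem map_range_interleave (p : List A) (b : ℕ → A) :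
    (List.range p.length).map (interleave p b) = p := by
  refine List.ext_getElem (by simp) fun r _ hr => ?_
  simpa using interleave_mul_add_of_lt p b 0 hr

theorem interleave_eq_of_add_two_eq {p : List A} (hp : p.reverse = p) {b : ℕ → A} {m n q : ℕ}
    (h : m + n + 2 = (p.length + 1) * q)
    (hb : ∀ i j, i + j + 2 = q → b i = b j) : interleave p b m = interleave p b n := by
  obtain ⟨i, r, hr, rfl⟩ : ∃ i r, r < p.length + 1 ∧ m = (p.length + 1) * i + r :=
    ⟨_, _, Nat.mod_lt m p.length.succ_pos, (Nat.div_add_mod m _).symm⟩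
  have hiq : i < q := by
    refine lt_of_mul_lt_mul_left (a := p.length + 1) ?_ (Nat.zero_le _)
    omega
  obtain ⟨j, rfl⟩ := Nat.exists_eq_add_of_lt hiq
  rw [mul_add, mul_add] at h
  rcases (Nat.le_of_lt_succ hr).lt_or_eq with hr | rfl
  · obtain rfl : n = (p.length + 1) * j + (p.length - 1 - r) := by omega
    have hpal : p[r]? = p[p.length - 1 - r]? := by rw [← List.getElem?_reverse hr, hp]
    have hr' : p.length - 1 - r < p.length := by omega
    rw [interleave_mul_add_of_lt p b i hr, interleave_mul_add_of_lt p b j hr']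
    simpa [hr, hr'] using hpal
  · obtain _ | j := j
    · omega
    · obtain rfl : n = (p.length + 1) * j + p.length := by
        rw [mul_add] at h
        omega
      rw [interleave_mul_add_length, interleave_mul_add_length]
      exact hb i j (by ring)

variable {p : List A} {b : ℕ → A} {x : A}

theorem interleave_eq_iff_of_notMem (hx : x ∉ p) {n : ℕ} :
    interleave p b n = x ↔ n % (p.length + 1) = p.length ∧ b (n / (p.length + 1)) = x := by
  have hlt := Nat.mod_lt n p.length.succ_pos
  rw [interleave, List.getD_eq_getElem?_getD]
  rcases (Nat.le_of_lt_succ hlt).lt_or_eq with hr | hr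
  · rw [List.getElem?_eq_getElem hr]
    have := List.getElem_mem hr
    simp only [Option.getD_some, hr.ne, false_and, iff_false]
    exact ne_of_mem_of_not_mem this hx
  · simp [hr]

theorem interleave_eq_iff_of_forall_ne (hx : ∀ m, b m ≠ x) {n : ℕ} :
    interleave p b n = x ↔ p[n % (p.length + 1)]? = some x := by
  rw [interleave, List.getD_eq_getElem?_getD]
  cases p[n % (p.length + 1)]? <;> simp [hx]

theorem modEq_mul_add_iff {n N r v P : ℕ} (hv : v < N) :
    n ≡ N * r + v [MOD N * P] ↔ n % N = v ∧ n / N ≡ r [MOD P] := by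
  have hN : 0 < N := by omega
  rw [Nat.ModEq, Nat.mod_mul, Nat.mod_mul, Nat.mul_add_mod, Nat.mod_eq_of_lt hv,
    Nat.mul_add_div hN, Nat.div_eq_of_lt hv, add_zero, Nat.ModEq]
  refine ⟨fun h => ?_, fun ⟨hmod, hdiv⟩ => by rw [hmod, hdiv]⟩
  have hmod := congrArg (· % N) h
  have hdiv := congrArg (· / N) h
  have hn := Nat.mod_lt n hN
  simp only [Nat.add_mul_mod_self_left, Nat.add_mul_div_left _ _ hN, Nat.mod_mod,
    Nat.mod_eq_of_lt hv, Nat.div_eq_of_lt hv, Nat.div_eq_of_lt hn, zero_add] at hmod hdiv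
  exact ⟨hmod, hdiv⟩

theorem isMechanical_interleave_of_modEq (hx : x ∉ p) {r P : ℕ} (hP : 0 < P)
    (hb : ∀ m, b m = x ↔ m ≡ r [MOD P]) : IsMechanical {n | interleave p b n = x} := by
  refine .of_modEq (b := (p.length + 1) * r + p.length) (P := (p.length + 1) * P) (by positivity)
    fun n => ?_
  rw [modEq_mul_add_iff (Nat.lt_succ_self _), Set.mem_ofPred_eq, interleave_eq_iff_of_notMem hx, hb]

theorem getElem?_append_self_eq_some_iff {w : List A} {i : ℕ} :
    (w ++ w)[i]? = some x ↔ w[i]? = some x ∨ ∃ j, i = w.length + j ∧ w[j]? = some x := by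
  rcases lt_or_ge i w.length with hi | hi
  · rw [List.getElem?_append_left hi, or_iff_left]
    rintro ⟨j, rfl, _⟩
    omega
  · obtain ⟨j, rfl⟩ := Nat.exists_eq_add_of_le hi
    rw [List.getElem?_append_right hi]
    simp

/-- In `w w □ w w □ ⋯` the positions of `x` are `r + |w|, r + |w| + d, …` modulo `2 |w| + 1`: the
progression runs through the second copy of `w` and, jumping over the hole, through the first
copy of the next period. -/
theorem getElem?_append_self_mod_eq_some_iff {w : List A} {r d h n : ℕ}
    (hd : d * h = w.length + 1) (hw : ∀ i, w[i]? = some x ↔ ∃ t < h, i = r + d * t) :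
    (w ++ w)[n % (2 * w.length + 1)]? = some x ↔
      ∃ t < h + h, n ≡ r + w.length + d * t [MOD 2 * w.length + 1] := by
  have hlt {t : ℕ} (ht : t < h) : r + d * t < w.length :=
    (List.getElem?_eq_some_iff.1 ((hw _).2 ⟨t, ht, rfl⟩)).1
  have hmod {v : ℕ} (hv : v < 2 * w.length + 1) :
      n % (2 * w.length + 1) = v ↔ n ≡ v [MOD 2 * w.length + 1] := by
    rw [Nat.ModEq, Nat.mod_eq_of_lt hv]
  have hfirst {t : ℕ} (ht : t < h) : n % (2 * w.length + 1) = r + d * t ↔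
      n ≡ r + w.length + d * (h + t) [MOD 2 * w.length + 1] := by
    have hwrap : r + w.length + d * (h + t) = r + d * t + (2 * w.length + 1) := by
      rw [mul_add, hd]
      ring
    have := hlt ht
    rw [hmod (by omega), hwrap]
    simp [Nat.ModEq]
  have hsecond {t : ℕ} (ht : t < h) : n % (2 * w.length + 1) = w.length + (r + d * t) ↔
      n ≡ r + w.length + d * t [MOD 2 * w.length + 1] := by
    have := hlt ht
    rw [hmod (by omega), ← add_assoc, add_comm w.length]
  rw [getElem?_append_self_eq_some_iff, hw]
  constructor
  · rintro (⟨t, ht, hn⟩ | ⟨_, hn, hj⟩)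
    · exact ⟨h + t, by omega, (hfirst ht).1 hn⟩
    · obtain ⟨t, ht, rfl⟩ := (hw _).1 hj
      exact ⟨t, by omega, (hsecond ht).1 hn⟩
  · rintro ⟨t, ht, hn⟩
    rcases lt_or_ge t h with hth | hth
    · exact .inr ⟨_, (hsecond hth).2 hn, (hw _).2 ⟨t, hth, rfl⟩⟩
    · obtain ⟨t, rfl⟩ := Nat.exists_eq_add_of_le hth
      have hth : t < h := by omega
      exact .inl ⟨t, hth, (hfirst hth).2 hn⟩

theorem isMechanical_interleave_append_self {w : List A} {r d h : ℕ}
    (hx : ∀ m, b m ≠ x) (hd : d * h = w.length + 1)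
    (hw : ∀ i, w[i]? = some x ↔ ∃ t < h, i = r + d * t) :
    IsMechanical {n | interleave (w ++ w) b n = x} := by
  refine .of_arithmeticProgression (α := h + h) (b := r + w.length) (d := d)
    (P := 2 * w.length + 1) ?_ (Nat.succ_pos _) ?_ fun n => ?_
  · have hdh : 0 < d * h := by omega
    have hh := Nat.pos_of_mul_pos_left hdh
    have hlast := (List.getElem?_eq_some_iff.1 ((hw _).2 ⟨h - 1, by omega, rfl⟩)).1
    have := Nat.le_mul_of_pos_left (h - 1) (Nat.pos_of_mul_pos_right hdh)
    omega
  · have hinv : (h + h) * d = 1 + (2 * w.length + 1) := by linarith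
    simp [hinv, Nat.ModEq]
  · rw [Set.mem_ofPred_eq, interleave_eq_iff_of_forall_ne hx, List.length_append, ← two_mul,
      getElem?_append_self_mod_eq_some_iff hd hw]

end Interleave

section DirectiveSequence

variable {A : Type*}

theorem wcat_append (u v : List A) (s : ℕ → A) : wcat (u ++ v) s = wcat u (wcat v s) := by
  funext n
  simp only [wcat, List.length_append, List.get_eq_getElem]
  split_ifs with huv hu hv hu hv
  · exact List.getElem_append_left hu
  · exact List.getElem_append_right (not_lt.1 hu)
  · omega
  · omega
  · omega
  · rw [Nat.sub_sub]

theorem wcat_map_range_constW (c : ℕ → A) (ℓ : ℕ) :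
    wcat ((List.range ℓ).map c) (constW (c ℓ)) = fun i => c (min i ℓ) := by
  funext i
  rcases lt_or_ge i ℓ with hi | hi
  · simp [wcat, hi, hi.le]
  · simp [wcat, constW, hi, hi.not_gt]

theorem map_range_wcat (u : List A) (s : ℕ → A) (j : ℕ) :
    (List.range (u.length + j)).map (wcat u s) = u ++ (List.range j).map s := by
  rw [map_range_add]
  congr 1
  · exact List.ext_getElem (by simp) fun i _ hi => by simp [wcat, hi]
  · simp [wcat]

end DirectiveSequence

section PalRuler

variable {A : Type*} [DecidableEq A] {c : ℕ → A} {ℓ : ℕ}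

theorem pal_append_map_range (hc : Set.InjOn c (Set.Iic ℓ)) {u : List A}
    (hu : ∀ i ≤ ℓ, c i ∉ u) (j : ℕ) :
    Pal (u ++ (List.range j).map fun i => c (min i ℓ)) =
      (List.range (((Pal u).length + 1) * rulerLength ℓ j - 1)).map
        (interleave (Pal u) (rulerWord c ℓ)) := by
  induction j with
  | zero => simp [rulerLength, map_range_interleave]
  | succ j ih =>
    have hpow : 0 < 2 ^ min j ℓ := by positivity
    have hle := two_pow_min_le_rulerLength ℓ j
    obtain ⟨M, hM⟩ := Nat.exists_eq_add_of_le' (hpow.trans_le hle)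
    have hlast : interleave (Pal u) (rulerWord c ℓ) (((Pal u).length + 1) * rulerLength ℓ j - 1)
        = c (min j ℓ) := by
      have := rulerWord_rulerLength_sub_one c ℓ j
      rw [hM] at this ⊢
      simpa [mul_add, ← add_assoc, interleave_mul_add_length] using this
    have hN := Nat.mul_le_mul_left ((Pal u).length + 1) hle
    have hNpos : 0 < ((Pal u).length + 1) * 2 ^ min j ℓ := by positivity
    rw [map_range_succ, ← List.append_assoc, pal_concat, ih, ← hlast,
      palClosure_map_range (i := ((Pal u).length + 1) * 2 ^ min j ℓ - 1) (by omega)]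
    · rw [rulerLength_succ, mul_add]
      congr 2
      omega
    · intro t ht
      refine interleave_eq_of_add_two_eq (reverse_pal u) (q := rulerLength ℓ (j + 1)) ?_
        fun _ _ => rulerWord_eq_of_add_two_eq
      rw [rulerLength_succ, mul_add]
      omega
    · intro t ht heq
      rw [hlast, interleave_eq_iff_of_notMem (mt mem_pal.1 (hu _ (min_le_right j ℓ)))] at heq
      refine rulerWord_ne_of_lt hc (min_le_right j ℓ) ?_ heq.2
      refine lt_of_mul_lt_mul_left (a := (Pal u).length + 1) ?_ (Nat.zero_le _)
      have := Nat.div_add_mod t ((Pal u).length + 1)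
      rw [mul_add]
      omega

theorem IsStdEpisturmian.eq_interleave_rulerWord (hc : Set.InjOn c (Set.Iic ℓ)) {u : List A}
    (hu : ∀ i ≤ ℓ, c i ∉ u) {s : ℕ → A}
    (hs : IsStdEpisturmian s (wcat u fun i => c (min i ℓ))) :
    s = interleave (Pal u) (rulerWord c ℓ) := by
  funext n
  have hprefix := hs (u.length + (n + 1 + ℓ))
  rw [map_range_wcat, pal_append_map_range hc hu, IsPrefixOf, List.length_map, List.length_range,
    List.map_inj_left] at hprefix
  refine (hprefix n (List.mem_range.2 ?_)).symm
  have := lt_rulerLength ℓ (n + 1 + ℓ)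
  have := Nat.le_mul_of_pos_left (rulerLength ℓ (n + 1 + ℓ)) (Pal u).length.succ_pos
  simp only [Nat.succ_eq_add_one] at this
  omega

theorem isBalanced_interleave_rulerWord (hc : Set.InjOn c (Set.Iic ℓ)) {p : List A}
    (hmech : ∀ x ∈ p, IsMechanical {n | interleave p (rulerWord c ℓ) n = x}) :
    IsBalanced (interleave p (rulerWord c ℓ)) := by
  refine isBalanced_of_forall_isMechanical fun x => ?_
  by_cases hx : x ∈ p
  · exact hmech x hx
  by_cases hxc : ∃ j ≤ ℓ, c j = x
  · obtain ⟨j, hj, rfl⟩ := hxc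
    obtain ⟨r, P, hP, hr⟩ := exists_rulerWord_eq_iff_modEq hc hj
    exact isMechanical_interleave_of_modEq hx hP hr
  · convert IsMechanical.empty
    refine Set.eq_empty_of_forall_notMem fun n hn => hxc ?_
    exact ⟨_, min_le_right _ _, ((interleave_eq_iff_of_notMem hx).1 hn).2⟩

variable {a : ℕ → A} {K : ℕ}

theorem pal_map_range (ha : Set.InjOn a (Set.Iic K)) :
    Pal ((List.range K).map a) = (List.range (2 ^ K - 1)).map (rulerWord a K) := by
  have hmin : (List.range K).map a = (List.range K).map fun i => a (min i K) :=
    List.map_congr_left fun i hi => by rw [min_eq_left (List.mem_range.1 hi).le]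
  have hpal := pal_append_map_range ha (u := []) (by simp) K
  simpa [← hmin, Pal, rulerLength_of_le] using hpal

theorem pal_map_range_concat (hK : 0 < K) (ha : Set.InjOn a (Set.Iic K)) :
    Pal ((List.range K).map a ++ [a 0]) =
      Pal ((List.range K).map a) ++ Pal ((List.range K).map a) := by
  have heven {n : ℕ} : rulerWord a K n = a 0 ↔ n ≡ 0 [MOD 2] := by
    simpa using rulerWord_eq_iff_modEq_of_lt ha hK
  obtain ⟨u, hu⟩ : ∃ u, Pal ((List.range K).map a) = u ++ [a 0] := by
    obtain ⟨k, rfl⟩ := Nat.exists_eq_add_of_le' hK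
    have hpos : 0 < 2 ^ k := by positivity
    have hlen : 2 ^ (k + 1) - 1 = 2 * (2 ^ k - 1) + 1 := by omega
    have hlast : rulerWord a (k + 1) (2 * (2 ^ k - 1)) = a 0 := heven.2 (by simp [Nat.ModEq])
    exact ⟨_, by rw [pal_map_range ha, hlen, map_range_succ, hlast]⟩
  have hrepeat : ¬ [a 0, a 0] <:+: u ++ [a 0] := by
    rw [← hu, pal_map_range ha, List.infix_iff_getElem?]
    rintro ⟨n, _, hword⟩
    have h0 := heven.1 (getElem?_map_range_eq_some_iff.1 (hword 0 (by simp))).2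
    have h1 := heven.1 (getElem?_map_range_eq_some_iff.1 (hword 1 (by simp))).2
    unfold Nat.ModEq at h0 h1
    omega
  rw [pal_concat, hu, palClosure_concat_self hrepeat, ← hu, reverse_pal]

theorem getElem?_pal_map_range_eq_some_iff (ha : Set.InjOn a (Set.Iic K)) {j : ℕ} (hj : j < K)
    (n : ℕ) : (Pal ((List.range K).map a))[n]? = some (a j) ↔
      ∃ t < 2 ^ (K - (j + 1)), n = 2 ^ j - 1 + 2 ^ (j + 1) * t := by
  have hpow : 2 ^ (j + 1) * 2 ^ (K - (j + 1)) = 2 ^ K := pow_mul_pow_sub 2 hj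
  have hpos : 0 < 2 ^ j := by positivity
  have hlt : 2 ^ j - 1 < 2 ^ (j + 1) := by
    rw [pow_succ]
    omega
  rw [pal_map_range ha, getElem?_map_range_eq_some_iff, rulerWord_eq_iff_modEq_of_lt ha hj,
    Nat.ModEq, Nat.mod_eq_of_lt hlt]
  constructor
  · rintro ⟨hn, hmod⟩
    have hdiv := Nat.mod_add_div n (2 ^ (j + 1))
    rw [hmod] at hdiv
    refine ⟨n / 2 ^ (j + 1), lt_of_mul_lt_mul_left (a := 2 ^ (j + 1)) ?_ (Nat.zero_le _), hdiv.symm⟩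
    omega
  · rintro ⟨t, ht, rfl⟩
    have := Nat.mul_le_mul_left (2 ^ (j + 1)) (Nat.succ_le_of_lt ht)
    rw [Nat.mul_succ, hpow, pow_succ 2 j] at this
    refine ⟨?_, by rw [Nat.add_mul_mod_self_left, Nat.mod_eq_of_lt hlt]⟩
    rw [pow_succ 2 j]
    omega

theorem isMechanical_interleave_pal_append_self (ha : Set.InjOn a (Set.Iic K)) {j : ℕ} (hj : j < K)
    {b : ℕ → A} (hb : ∀ m, b m ≠ a j) :
    IsMechanical
      {n | interleave (Pal ((List.range K).map a) ++ Pal ((List.range K).map a)) b n = a j} := by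
  refine isMechanical_interleave_append_self hb ?_ (getElem?_pal_map_range_eq_some_iff ha hj)
  rw [pow_mul_pow_sub 2 hj, pal_map_range ha, List.length_map, List.length_range,
    Nat.sub_add_cancel Nat.one_le_two_pow]

theorem isBalanced_of_isStdEpisturmian_wcat_concat (hK : 0 < K)
    (ha : Set.InjOn a (Set.Iic (K + ℓ))) {s : ℕ → A}
    (hs : IsStdEpisturmian s (wcat ((List.range K).map a ++ [a 0]) fun i => a (K + min i ℓ))) :
    IsBalanced s := by
  have hfirst : Set.InjOn a (Set.Iic K) := ha.mono (Set.Iic_subset_Iic.2 (Nat.le_add_right K ℓ))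
  have hholes : Set.InjOn (fun i => a (K + i)) (Set.Iic ℓ) :=
    ha.comp (fun _ _ _ _ => Nat.add_left_cancel) fun _ => Nat.add_le_add_left (k := K)
  have hne {i j : ℕ} (hi : i ≤ ℓ) (hj : j < K) : a (K + i) ≠ a j := fun h => by
    have := ha (Nat.add_le_add_left hi K) (hj.le.trans (Nat.le_add_right K ℓ)) h
    omega
  have hdisjoint : ∀ i ≤ ℓ, a (K + i) ∉ (List.range K).map a ++ [a 0] := fun i hi => by
    simpa [hne hi hK] using fun j hj => (hne hi hj).symm
  rw [hs.eq_interleave_rulerWord hholes hdisjoint, pal_map_range_concat hK hfirst]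
  refine isBalanced_interleave_rulerWord hholes fun x hx => ?_
  obtain ⟨j, hj, rfl⟩ : ∃ j < K, a j = x := by simpa [mem_pal] using hx
  exact isMechanical_interleave_pal_append_self hfirst hj fun m => hne (min_le_right _ _) hj

end PalRuler

/-- The case `ℓ = 0` is the separate family `a₁⋯a_{k−1}·a₁·a_k^ω`, to which the Fraenkel words
belong. -/
theorem family_b_balanced_general {A : Type*} [DecidableEq A] (s : ℕ → A)
    (k ℓ : ℕ) (a : ℕ → A)
    (hk : 2 ≤ k) (hinj : Set.InjOn a (Set.Iio (k + ℓ)))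
    (hepi : IsStdEpisturmian s
      (wcat ((List.range (k - 1)).map a ++ [a 0] ++
          ((List.range (k + ℓ - 1)).drop (k - 1)).map a)
        (constW (a (k + ℓ - 1))))) :
    IsBalanced s := by
  obtain ⟨K, rfl⟩ := Nat.exists_eq_add_of_le' (show 1 ≤ k by omega)
  have hlast : K + 1 + ℓ - 1 = K + ℓ := by omega
  have htail : ((List.range (K + ℓ)).drop K).map a = (List.range ℓ).map fun i => a (K + i) := by
    simp [List.range_add]
  rw [hlast, Nat.add_sub_cancel, htail, wcat_append,
    wcat_map_range_constW fun i => a (K + i)] at hepi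
  refine isBalanced_of_isStdEpisturmian_wcat_concat (by omega) (hinj.mono fun i hi => ?_) hepi
  rw [Set.mem_Iic] at hi
  rw [Set.mem_Iio]
  omega

/-- A standard episturmian sequence with directive sequence
`a₁⋯a_{k−1}·a₁·a_k⋯a_{k+ℓ−1}·a_{k+ℓ}^ω` (`k ≥ 2`, `ℓ ≥ 1`, pairwise distinct letters,
indexed from 0 here) is balanced. -/
theorem family_b_balanced {A : Type*} [DecidableEq A] (s : ℕ → A)
    (k ℓ : ℕ) (a : ℕ → A)
    (hk : 2 ≤ k) (hℓ : 1 ≤ ℓ) (hinj : Set.InjOn a (Set.Iio (k + ℓ)))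
    (hepi : IsStdEpisturmian s
      (wcat ((List.range (k - 1)).map a ++ [a 0] ++
          ((List.range (k + ℓ - 1)).drop (k - 1)).map a)
        (constW (a (k + ℓ - 1))))) :
    IsBalanced s :=
  family_b_balanced_general s k ℓ a hk hinj hepi
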